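/- Let X ⊆ A⁺ be a recognizable maximal code. If the submonoid X* is completely reducible over ℚ, then X is a bifix code. -/

import Mathlib

namespace Birec

variable {A : Type*}

/-- The left quotient `u⁻¹S = {v | u v ∈ S}`. -/
def leftQuot (S : Set (List A)) (u : List A) : Set (List A) := {v | u ++ v ∈ S}

/-- A language is recognizable iff it has finitely many left quotients (Nerode). -/
def Recognizable (S : Set (List A)) : Prop := (Set.range (leftQuot S)).Finite

/-- The reversal `S̃` of a language. -/
def langRev (S : Set (List A)) : Set (List A) := {w | w.reverse ∈ S}

/-- A recognizable set is recurrent if its minimal automaton (whose states are the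
nonempty left quotients) is strongly connected. -/
def Recurrent (S : Set (List A)) : Prop :=
  Recognizable S ∧
    ∀ u v : List A, (leftQuot S u).Nonempty → (leftQuot S v).Nonempty →
      ∃ w : List A, leftQuot S (u ++ w) = leftQuot S v

/-- A set is birecurrent if it is recurrent together with its reversal. -/
def Birecurrent (S : Set (List A)) : Prop := Recurrent S ∧ Recurrent (langRev S)

/-- A set is dense if every word is a factor of one of its words. -/
def LangDense (S : Set (List A)) : Prop := ∀ v : List A, ∃ u w : List A, u ++ v ++ w ∈ S

end Birec
namespace Birec

variable {A : Type*}

/-- A prefix code: a set of nonempty words, none of which is a proper prefix of another. -/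
def IsPrefixCode (X : Set (List A)) : Prop :=
  [] ∉ X ∧ ∀ x ∈ X, ∀ y ∈ X, x <+: y → x = y

/-- A suffix code: a set of nonempty words, none of which is a proper suffix of another. -/
def IsSuffixCode (X : Set (List A)) : Prop :=
  [] ∉ X ∧ ∀ x ∈ X, ∀ y ∈ X, x <:+ y → x = y

/-- A bifix code is both prefix and suffix. -/
def IsBifixCode (X : Set (List A)) : Prop := IsPrefixCode X ∧ IsSuffixCode X

/-- A code: every word has at most one factorization into words of `X`. -/
def IsCode (X : Set (List A)) : Prop :=
  [] ∉ X ∧ ∀ l m : List (List A), (∀ x ∈ l, x ∈ X) → (∀ x ∈ m, x ∈ X) →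
    l.flatten = m.flatten → l = m

/-- The submonoid `X*` generated by a set of words. -/
def star (X : Set (List A)) : Set (List A) :=
  {w | ∃ l : List (List A), (∀ x ∈ l, x ∈ X) ∧ l.flatten = w}

/-- Product of two languages. -/
def setMul (X Y : Set (List A)) : Set (List A) := {w | ∃ x ∈ X, ∃ y ∈ Y, w = x ++ y}

/-- The proper prefixes of words of `X`. -/
def properPrefixes (X : Set (List A)) : Set (List A) := {p | ∃ x ∈ X, p <+: x ∧ p ≠ x}

/-- The proper suffixes of words of `X`. -/
def properSuffixes (X : Set (List A)) : Set (List A) := {p | ∃ x ∈ X, p <:+ x ∧ p ≠ x}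

def IsMaximalPrefixCode (X : Set (List A)) : Prop :=
  IsPrefixCode X ∧ ∀ Y : Set (List A), IsPrefixCode Y → X ⊆ Y → Y = X

def IsMaximalSuffixCode (X : Set (List A)) : Prop :=
  IsSuffixCode X ∧ ∀ Y : Set (List A), IsSuffixCode Y → X ⊆ Y → Y = X

def IsMaximalBifixCode (X : Set (List A)) : Prop :=
  IsBifixCode X ∧ ∀ Y : Set (List A), IsBifixCode Y → X ⊆ Y → Y = X

def IsMaximalCode (X : Set (List A)) : Prop :=
  IsCode X ∧ ∀ Y : Set (List A), IsCode Y → X ⊆ Y → Y = X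

end Birec
namespace Birec

variable {A : Type*}

/-- The characteristic series of a language, as a function `A* → ℚ`. -/
noncomputable def charFun (S : Set (List A)) : List A → ℚ := S.indicator 1

/-- The shift operator `τ ↦ τ · u`, where `(τ · u)(v) = τ(u v)`; this is the linear
action underlying the syntactic representation. -/
def shiftOp (u : List A) : (List A → ℚ) →ₗ[ℚ] (List A → ℚ) where
  toFun τ := fun v => τ (u ++ v)
  map_add' := fun _ _ => rfl
  map_smul' := fun _ _ => rfl

/-- The syntactic space of a series `σ`: the subspace of `ℚ⟨⟨A⟩⟩` spanned by the
series `σ · u` for `u ∈ A*`. -/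
def synSpace (σ : List A → ℚ) : Submodule ℚ (List A → ℚ) :=
  Submodule.span ℚ (Set.range fun u : List A => shiftOp u σ)

/-- A subspace is invariant if it is stable under all shift operators. -/
def InvariantSub (W : Submodule ℚ (List A → ℚ)) : Prop :=
  ∀ τ ∈ W, ∀ u : List A, shiftOp u τ ∈ W

/-- An invariant subspace is irreducible if it is nonzero and has no nontrivial
invariant subspace. -/
def IrreducibleSub (W : Submodule ℚ (List A → ℚ)) : Prop :=
  W ≠ ⊥ ∧ ∀ W' : Submodule ℚ (List A → ℚ), W' ≤ W → InvariantSub W' → W' = ⊥ ∨ W' = W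

/-- A series is completely reducible if its syntactic space is a direct sum of
invariant irreducible subspaces (equivalently, its syntactic representation is a
direct sum of irreducible representations). -/
def CompletelyReducibleSeries (σ : List A → ℚ) : Prop :=
  ∃ (n : ℕ) (W : Fin n → Submodule ℚ (List A → ℚ)),
    (∀ i, W i ≤ synSpace σ ∧ InvariantSub (W i) ∧ IrreducibleSub (W i)) ∧
    iSupIndep W ∧ (⨆ i, W i) = synSpace σ

/-- A language is completely reducible if its characteristic series is. -/
noncomputable def CompletelyReducibleLang (S : Set (List A)) : Prop :=
  CompletelyReducibleSeries (charFun S)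

/-- The rank of the element `ψ_σ(u)` of the syntactic monoid, i.e. the dimension of the
image of the syntactic space under the shift by `u`. -/
noncomputable def psiRank (σ : List A → ℚ) (u : List A) : ℕ :=
  Module.finrank ℚ ↥(Submodule.map (shiftOp u) (synSpace σ))

/-- `u` induces an element of minimal nonzero rank of the syntactic monoid. -/
def IsMinNonzeroPsiRank (σ : List A → ℚ) (u : List A) : Prop :=
  psiRank σ u ≠ 0 ∧ ∀ v : List A, psiRank σ v ≠ 0 → psiRank σ u ≤ psiRank σ v

/-- The eventual kernel `EK(S)`: the intersection (inside the syntactic space) of the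
kernels of all elements of minimal nonzero rank of the syntactic monoid. -/
noncomputable def EK (S : Set (List A)) : Submodule ℚ (List A → ℚ) :=
  synSpace (charFun S) ⊓
    ⨅ u ∈ {u : List A | IsMinNonzeroPsiRank (charFun S) u}, LinearMap.ker (shiftOp u)

/-- The eventual range `ER(S)`: the subspace spanned by the images of all elements of
minimal nonzero rank of the syntactic monoid. -/
noncomputable def ER (S : Set (List A)) : Submodule ℚ (List A → ℚ) :=
  ⨆ u ∈ {u : List A | IsMinNonzeroPsiRank (charFun S) u},
    Submodule.map (shiftOp u) (synSpace (charFun S))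

end Birec

namespace Birec

variable {A : Type*}

section Words

variable {X : Set (List A)}

theorem nil_mem_star (X : Set (List A)) : [] ∈ star X := ⟨[], by simp, rfl⟩

theorem subset_star (X : Set (List A)) : X ⊆ star X := fun x hx => ⟨[x], by simpa using hx, by simp⟩

theorem append_mem_star {u v : List A} (hu : u ∈ star X) (hv : v ∈ star X) : u ++ v ∈ star X := by
  obtain ⟨l, hl, rfl⟩ := hu
  obtain ⟨m, hm, rfl⟩ := hv
  refine ⟨l ++ m, fun x hx => ?_, by simp⟩
  rcases List.mem_append.1 hx with h | h
  exacts [hl x h, hm x h]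

theorem append_mem_star_iff {u v : List A} :
    u ++ v ∈ star X ↔ (u ∈ star X ∧ v ∈ star X) ∨
      ∃ p s t r, u = p ++ s ∧ v = t ++ r ∧ p ∈ star X ∧ s ++ t ∈ X ∧ r ∈ star X := by
  constructor
  · rintro ⟨l, hl, h⟩
    rcases List.flatten_eq_append_iff.1 h with ⟨a, b, rfl, rfl, rfl⟩ | ⟨a, s, c, t, d, rfl, rfl, rfl⟩
    · simp only [List.mem_append] at hl
      exact Or.inl ⟨⟨a, fun x hx => hl x (Or.inl hx), rfl⟩, ⟨b, fun x hx => hl x (Or.inr hx), rfl⟩⟩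
    · simp only [List.mem_append, List.mem_cons] at hl
      exact Or.inr ⟨a.flatten, s, c :: t, d.flatten, rfl, rfl,
        ⟨a, fun x hx => hl x (Or.inl hx), rfl⟩, hl _ (Or.inr (Or.inl rfl)),
        ⟨d, fun x hx => hl x (Or.inr (Or.inr hx)), rfl⟩⟩
  · rintro (⟨hu, hv⟩ | ⟨p, s, t, r, rfl, rfl, hp, hst, hr⟩)
    · exact append_mem_star hu hv
    · simpa using append_mem_star hp (append_mem_star (subset_star X hst) hr)

/-- The star of a recognizable language is recognizable. -/
theorem Recognizable.star (h : Recognizable X) : Recognizable (star X) := by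
  let F : Set (Set (List A)) × Prop → Set (List A) := fun K =>
    {v | (K.2 ∧ v ∈ Birec.star X) ∨ ∃ L ∈ K.1, ∃ t ∈ L, ∃ r ∈ Birec.star X, v = t ++ r}
  refine ((h.powerset.prod (Set.finite_univ (α := Prop))).image F).subset ?_
  rintro _ ⟨u, rfl⟩
  refine ⟨({L | ∃ p s, u = p ++ s ∧ p ∈ Birec.star X ∧ leftQuot X s = L}, u ∈ Birec.star X),
    ⟨?_, trivial⟩, ?_⟩
  · rintro _ ⟨p, s, -, -, rfl⟩
    exact ⟨s, rfl⟩
  · ext v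
    simp only [F, leftQuot, Set.mem_ofPred_eq, append_mem_star_iff]
    refine or_congr Iff.rfl ⟨?_, ?_⟩
    · rintro ⟨_, ⟨p, s, hu, hp, rfl⟩, t, ht, r, hr, hv⟩
      exact ⟨p, s, t, r, hu, hv, hp, ht, hr⟩
    · rintro ⟨p, s, t, r, hu, hv, hp, ht, hr⟩
      exact ⟨_, ⟨p, s, hu, hp, rfl⟩, t, ht, r, hr, hv⟩

/-- The submonoid generated by a code is stable. -/
theorem IsCode.mem_star_of_append (hX : IsCode X) {u w : List A} (hu : u ∈ star X)
    (huw : u ++ w ∈ star X) (hwu : w ++ u ∈ star X) : w ∈ star X := by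
  obtain ⟨l, hl, rfl⟩ := hu
  obtain ⟨m, hm, hm'⟩ := huw
  obtain ⟨n, hn, hn'⟩ := hwu
  have key : l ++ n = m ++ l := by
    refine hX.2 _ _ ?_ ?_ (by simp [hm', hn'])
    · simp only [List.mem_append]; rintro x (h | h); exacts [hl x h, hn x h]
    · simp only [List.mem_append]; rintro x (h | h); exacts [hm x h, hl x h]
  rcases List.append_eq_append_iff.1 key with ⟨c, rfl, rfl⟩ | ⟨c, rfl, -⟩
  · refine ⟨c, fun x hx => hm x (by simp [hx]), by simpa using hm'⟩
  · have := congrArg List.length hm'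
    simp only [List.flatten_append, List.length_append] at this
    have hw : w = [] := List.length_eq_zero_iff.1 (by omega)
    exact hw ▸ nil_mem_star X

/-- An unbordered word that is not a factor of any word of `X*` can be added to a code. -/
theorem IsCode.insert (hX : IsCode X) {y : List A} (hy : y ≠ [])
    (hborder : ∀ z, z ≠ [] → z <+: y → z <:+ y → z = y)
    (hfac : ∀ p q, p ++ y ++ q ∉ star X) : IsCode (insert y X) := by
  classical
  have hyX : y ∉ X := fun h => hfac [] [] (by simpa using subset_star X h)
  have align : ∀ p ∈ star X, ∀ p' ∈ star X, ∀ r r' : List A,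
      p ++ y ++ r = p' ++ y ++ r' → p' <+: p := by
    intro p hp p' hp' r r' h
    simp only [List.append_assoc] at h
    rcases List.append_eq_append_iff.1 h with ⟨c, rfl, hc⟩ | ⟨c, rfl, -⟩
    · rcases List.append_eq_append_iff.1 hc with ⟨d, rfl, -⟩ | ⟨d, hd, hd'⟩
      · exact absurd hp' (by simpa using hfac p d)
      · by_cases hd0 : d = []
        · have hcy : c = y := by simpa [hd0] using hd.symm
          exact absurd hp' (by simpa [hcy] using hfac p [])
        · by_cases hly : d.length ≤ y.length
          · have hpre : d <+: y :=
              List.prefix_of_prefix_length_le (l₃ := y ++ r') ⟨r, hd'.symm⟩ ⟨r', rfl⟩ hly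
            have := hborder d hd0 hpre ⟨c, hd.symm⟩
            rw [this] at hd
            have hc0 : c = [] := by simpa using hd
            simp [hc0]
          · have := congrArg List.length hd
            simp at this
            omega
    · exact ⟨c, rfl⟩
  have split : ∀ l : List (List A), (∀ x ∈ l, x ∈ Insert.insert y X) → (∀ x ∈ l, x ∈ X) ∨
      ∃ a b, l = a ++ y :: b ∧ (∀ x ∈ a, x ∈ X) ∧ ∀ x ∈ b, x ∈ Insert.insert y X := by
    intro l hl
    by_cases h : y ∈ l
    · obtain ⟨a, b, rfl, hya⟩ := List.eq_append_cons_of_mem h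
      refine Or.inr ⟨a, b, rfl, fun x hx => ?_, fun x hx => hl x (by simp [hx])⟩
      rcases hl x (by simp [hx]) with rfl | h'
      exacts [absurd hx hya, h']
    · refine Or.inl fun x hx => ?_
      rcases hl x hx with rfl | h'
      exacts [absurd hx h, h']
  refine ⟨by rintro (h | h); exacts [hy h.symm, hX.1 h], ?_⟩
  intro l
  induction hn : l.length using Nat.strong_induction_on generalizing l with
  | _ n ih =>
  intro m hl hm h
  rcases split l hl with hl' | ⟨a, b, rfl, ha, hb⟩ <;> rcases split m hm with hm' | ⟨c, d, rfl, hc, hd⟩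
  · exact hX.2 l m hl' hm' h
  · exact absurd (show l.flatten ∈ star X from ⟨l, hl', rfl⟩)
      (by simpa [h] using hfac c.flatten d.flatten)
  · exact absurd (show m.flatten ∈ star X from ⟨m, hm', rfl⟩)
      (by simpa [← h] using hfac a.flatten b.flatten)
  · have h' : a.flatten ++ y ++ b.flatten = c.flatten ++ y ++ d.flatten := by simpa using h
    have h1 := align _ ⟨a, ha, rfl⟩ _ ⟨c, hc, rfl⟩ _ _ h'
    have h2 := align _ ⟨c, hc, rfl⟩ _ ⟨a, ha, rfl⟩ _ _ h'.symm
    have hac := h1.eq_of_length (le_antisymm h1.length_le h2.length_le)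
    have hac' : a = c := hX.2 a c ha hc hac.symm
    subst hac'
    have hbd : b.flatten = d.flatten := by simpa using h'
    rw [ih b.length (by simp at hn; omega) b rfl d hb hd hbd]

/-- If the alphabet has two letters, every nonempty word is a prefix of an unbordered word. -/
theorem exists_unbordered_append {a b : A} (hab : b ≠ a) (w : List A) :
    ∃ q, ∀ z, z ≠ [] → z <+: (a :: w) ++ q → z <:+ (a :: w) ++ q → z = (a :: w) ++ q := by
  classical
  refine ⟨List.replicate (a :: w).length b, fun z hz hpre hsuf => ?_⟩
  obtain ⟨z', rfl⟩ : ∃ z', z = a :: z' := by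
    cases z with
    | nil => exact absurd rfl hz
    | cons c z' =>
      obtain ⟨t, ht⟩ := hpre
      simp only [List.cons_append, List.cons.injEq] at ht
      exact ⟨z', by rw [ht.1]⟩
  by_cases hlen : (a :: z').length ≤ (a :: w).length
  · have : a :: z' <:+ List.replicate (a :: w).length b :=
      List.suffix_of_suffix_length_le hsuf (List.suffix_append _ _) (by simpa using hlen)
    have := List.eq_of_mem_replicate (this.subset (List.mem_cons_self))
    exact absurd this.symm hab
  · have h1 : a :: w <+: a :: z' :=
      List.prefix_of_prefix_length_le (List.prefix_append _ _) hpre (by omega)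
    have hc1 := h1.sublist.count_le a
    obtain ⟨t, ht⟩ := hsuf
    cases t with
    | nil => exact ht
    | cons c t =>
      have hca : c = a := by simp at ht; exact ht.1
      have := congrArg (List.count a) ht
      simp only [List.count_append, hca, List.count_replicate, List.count_cons_self] at this hc1
      simp [hab] at this
      omega

/-- A maximal code is complete. -/
theorem IsMaximalCode.langDense_star (hX : IsMaximalCode X) : LangDense (star X) := by
  intro v
  by_contra! hv
  cases v with
  | nil => exact hv [] [] (by simpa using nil_mem_star X)
  | cons a w =>
  by_cases hA : ∃ b : A, b ≠ a
  · obtain ⟨b, hb⟩ := hA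
    obtain ⟨q, hq⟩ := exists_unbordered_append hb w
    have hfac : ∀ p r, p ++ (a :: w ++ q) ++ r ∉ star X := fun p r h =>
      hv p (q ++ r) (by simpa using h)
    have := hX.2 _ (hX.1.insert (by simp) hq hfac) (Set.subset_insert _ _)
    have hmem : a :: w ++ q ∈ X := this ▸ Set.mem_insert _ _
    exact hfac [] [] (by simpa using subset_star X hmem)
  · push Not at hA
    have hrep : ∀ l : List A, l = List.replicate l.length a := fun l =>
      List.eq_replicate_iff.2 ⟨rfl, fun b _ => hA b⟩
    rcases X.eq_empty_or_nonempty with rfl | ⟨x, hx⟩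
    · have hcode : IsCode {[a]} := by
        refine ⟨by simp, fun l m hl hm h => ?_⟩
        have hl' := List.eq_replicate_iff.2 ⟨rfl, hl⟩
        have hm' := List.eq_replicate_iff.2 ⟨rfl, hm⟩
        rw [hl', hm'] at h ⊢
        have := congrArg List.length h
        simp at this
        rw [this]
      exact Set.singleton_ne_empty _ (hX.2 _ hcode (Set.empty_subset _))
    · have hx0 : x.length ≠ 0 := fun h => hX.1.1 (List.length_eq_zero_iff.1 h ▸ hx)
      refine hv [] (List.replicate ((w.length + 1) * x.length - (w.length + 1)) a)
        ⟨List.replicate (w.length + 1) x, fun y hy => List.eq_of_mem_replicate hy ▸ hx, ?_⟩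
      rw [hrep (List.flatten _), hrep ([] ++ _ ++ _)]
      congr 1
      have := Nat.le_mul_of_pos_right (w.length + 1) (Nat.pos_of_ne_zero hx0)
      simp
      omega

end Words

end Birec

namespace Birec

section FiniteMonoid

variable {M : Type*} [Monoid M]

theorem exists_isIdempotentElem_pow [Finite M] (p : M) :
    ∃ n, 0 < n ∧ IsIdempotentElem (p ^ n) := by
  obtain ⟨i, j, hij, h⟩ := Set.finite_univ.exists_lt_map_eq_of_forall_mem
    (f := fun n : ℕ => p ^ n) (fun _ => Set.mem_univ _)
  obtain ⟨d, rfl⟩ := Nat.exists_eq_add_of_lt hij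
  have hstep : ∀ n, i ≤ n → ∀ k, p ^ (n + k * (d + 1)) = p ^ n := by
    intro n hn k
    induction k with
    | zero => simp
    | succ k ih =>
      obtain ⟨c, rfl⟩ := Nat.exists_eq_add_of_le hn
      calc p ^ (i + c + (k + 1) * (d + 1))
          = p ^ (i + d + 1) * p ^ (c + k * (d + 1)) := by rw [← pow_add]; congr 1; ring
        _ = p ^ (i + c + k * (d + 1)) := by rw [← h, ← pow_add]; congr 1; ring
        _ = p ^ (i + c) := ih
  refine ⟨(i + 1) * (d + 1), by positivity, ?_⟩
  rw [IsIdempotentElem, ← pow_add]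
  exact hstep _ (by nlinarith) _

/-- An idempotent `e` such that `eMe` is a group. -/
def IsMinimalIdempotent (e : M) : Prop :=
  IsIdempotentElem e ∧ ∀ m, ∃ n, e * m * e * n = e

/-- There is an element `k` such that every idempotent of the ideal `MkM` is minimal. -/
theorem exists_forall_isMinimalIdempotent (M : Type*) [Monoid M] [Finite M] :
    ∃ k : M, ∀ a b : M, IsIdempotentElem (a * k * b) → IsMinimalIdempotent (a * k * b) := by
  obtain ⟨k, hk⟩ := Finite.exists_min fun m : M => (Set.range (m * ·)).ncard
  refine ⟨k, fun a b he => ⟨he, fun m => ?_⟩⟩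
  generalize hdef : a * k * b = e at he ⊢
  have hcard : (Set.range (e * ·)).ncard ≤ (Set.range (k * ·)).ncard := by
    refine (Set.ncard_le_ncard ?_ (Set.toFinite _)).trans
      (Set.ncard_image_le (f := (a * ·)) (Set.toFinite _))
    rintro _ ⟨x, rfl⟩
    exact ⟨k * (b * x), ⟨_, rfl⟩, by simp [← hdef, mul_assoc]⟩
  have hsub : Set.range (e * m * e * ·) ⊆ Set.range (e * ·) := by
    rintro _ ⟨x, rfl⟩
    exact ⟨m * e * x, by simp [mul_assoc]⟩
  have heq := Set.eq_of_subset_of_ncard_le hsub (hcard.trans (hk _)) (Set.toFinite _)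
  have : e ∈ Set.range (e * m * e * ·) := heq ▸ ⟨1, by simp⟩
  exact this

variable [Fintype M]

open Classical in
/-- The local submonoid `eMe`, as a finite set. -/
noncomputable def corner (e : M) : Finset M :=
  Finset.univ.filter fun g => e * g = g ∧ g * e = g

variable {e k : M}

theorem mem_corner {g : M} : g ∈ corner e ↔ e * g = g ∧ g * e = g := by
  simp [corner]

theorem mul_mem_corner {g h : M} (hg : g ∈ corner e) (hh : h ∈ corner e) : g * h ∈ corner e := by
  rw [mem_corner] at *
  exact ⟨by rw [← mul_assoc, hg.1], by rw [mul_assoc, hh.2]⟩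

theorem IsIdempotentElem.mem_corner (he : IsIdempotentElem e) (m : M) :
    e * m * e ∈ corner e := by
  rw [Birec.mem_corner]
  exact ⟨by rw [← mul_assoc, ← mul_assoc, he], by rw [mul_assoc, he]⟩

theorem IsIdempotentElem.self_mem_corner (he : IsIdempotentElem e) : e ∈ corner e :=
  Birec.mem_corner.2 ⟨he, he⟩

theorem IsMinimalIdempotent.exists_inverse (he : IsMinimalIdempotent e) (hk : k ∈ corner e) :
    ∃ n ∈ corner e, k * n = e ∧ n * k = e := by
  have right : ∀ k ∈ corner e, ∃ n ∈ corner e, k * n = e := by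
    intro k hk
    rw [mem_corner] at hk
    obtain ⟨n, hn⟩ := he.2 k
    rw [hk.1, hk.2] at hn
    refine ⟨e * n * e, IsIdempotentElem.mem_corner he.1 n, ?_⟩
    rw [← mul_assoc, ← mul_assoc, hk.2, hn, he.1]
  obtain ⟨n, hn, hkn⟩ := right k hk
  obtain ⟨k', hk', hnk'⟩ := right n hn
  refine ⟨n, hn, hkn, ?_⟩
  have : k = k' := by
    calc k = k * (n * k') := by rw [hnk', (mem_corner.1 hk).2]
      _ = k' := by rw [← mul_assoc, hkn, (mem_corner.1 hk').1]
  rw [this, hnk']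

theorem IsMinimalIdempotent.sum_mul_right {R : Type*} [AddCommMonoid R]
    (he : IsMinimalIdempotent e) (hk : k ∈ corner e) (f : M → R) :
    ∑ g ∈ corner e, f (g * k) = ∑ g ∈ corner e, f g := by
  obtain ⟨n, hn, hkn, hnk⟩ := he.exists_inverse hk
  refine Finset.sum_nbij' (· * k) (· * n) (fun g hg => mul_mem_corner hg hk)
    (fun g hg => mul_mem_corner hg hn) (fun g hg => ?_) (fun g hg => ?_) fun _ _ => rfl
  · simp only [mul_assoc, hkn, (mem_corner.1 hg).2]
  · simp only [mul_assoc, hnk, (mem_corner.1 hg).2]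

theorem IsMinimalIdempotent.sum_mul_left {R : Type*} [AddCommMonoid R]
    (he : IsMinimalIdempotent e) (hk : k ∈ corner e) (f : M → R) :
    ∑ g ∈ corner e, f (k * g) = ∑ g ∈ corner e, f g := by
  obtain ⟨n, hn, hkn, hnk⟩ := he.exists_inverse hk
  refine Finset.sum_nbij' (k * ·) (n * ·) (fun g hg => mul_mem_corner hk hg)
    (fun g hg => mul_mem_corner hn hg) (fun g hg => ?_) (fun g hg => ?_) fun _ _ => rfl
  · simp only [← mul_assoc, hnk, (mem_corner.1 hg).1]
  · simp only [← mul_assoc, hkn, (mem_corner.1 hg).1]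

end FiniteMonoid

section SyntacticMonoid

universe u

variable {A : Type u} {S : Set (List A)}

/-- A recognizable language is recognized by a morphism onto a finite monoid. -/
theorem Recognizable.exists_monoid (h : Recognizable S) :
    ∃ (M : Type u) (_ : Monoid M) (_ : Finite M) (ψ : List A → M),
      (∀ u v, ψ (u ++ v) = ψ u * ψ v) ∧ Function.Surjective ψ ∧
        ∀ u v, ψ u = ψ v → (u ∈ S ↔ v ∈ S) := by
  let Q := Set.range (leftQuot S)
  have : Finite Q := h
  have hcomp : ∀ (T : Set (List A)) (u v : List A),
      leftQuot (leftQuot T u) v = leftQuot T (u ++ v) := fun T u v => by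
    ext w; simp [leftQuot]
  let act : List A → Function.End Q := fun u L =>
    ⟨leftQuot L.1 u, by obtain ⟨_, v, rfl⟩ := L; exact ⟨v ++ u, (hcomp S v u).symm⟩⟩
  have : Finite (Function.End Q) := inferInstanceAs (Finite (Q → Q))
  have : Finite (Function.End Q)ᵐᵒᵖ := Finite.of_equiv _ MulOpposite.opEquiv
  let φ : FreeMonoid A →* (Function.End Q)ᵐᵒᵖ :=
    { toFun := fun u => MulOpposite.op (act u.toList)
      map_one' := rfl
      map_mul' := fun u v => by
        refine MulOpposite.unop_injective (funext fun L => Subtype.ext ?_)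
        exact (hcomp L.1 u.toList v.toList).symm }
  refine ⟨MonoidHom.mrange φ, inferInstance, Subtype.finite,
    fun u => φ.mrangeRestrict (FreeMonoid.ofList u),
    fun u v => map_mul φ.mrangeRestrict (FreeMonoid.ofList u) (FreeMonoid.ofList v),
    φ.mrangeRestrict_surjective, fun u v huv => ?_⟩
  have h1 : act u = act v := MulOpposite.op_injective (congrArg Subtype.val huv)
  have h2 := congrArg Subtype.val (congrFun h1 ⟨leftQuot S [], [], rfl⟩)
  have h3 : leftQuot S u = leftQuot S v := by simpa [act, hcomp] using h2
  have h4 := Set.ext_iff.1 h3 []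
  simpa [leftQuot] using h4

end SyntacticMonoid

section CompletelyReducible

variable {A : Type*} {σ : List A → ℚ}

theorem shiftOp_apply (u v : List A) (τ : List A → ℚ) : shiftOp u τ v = τ (u ++ v) := rfl

theorem shiftOp_append (u v : List A) (τ : List A → ℚ) :
    shiftOp (u ++ v) τ = shiftOp v (shiftOp u τ) := by
  ext w; simp [shiftOp_apply]

theorem invariantSub_synSpace (σ : List A → ℚ) : InvariantSub (synSpace σ) := by
  intro τ hτ u
  have : synSpace σ ≤ (synSpace σ).comap (shiftOp u) := by
    refine Submodule.span_le.2 ?_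
    rintro _ ⟨v, rfl⟩
    exact Submodule.subset_span ⟨v ++ u, shiftOp_append v u σ⟩
  exact this hτ

theorem self_mem_synSpace (σ : List A → ℚ) : σ ∈ synSpace σ :=
  Submodule.subset_span ⟨[], rfl⟩

/-- The invariant subspace generated by the image of `W` under the shift by `u`. -/
def shiftSpan (u : List A) (W : Submodule ℚ (List A → ℚ)) : Submodule ℚ (List A → ℚ) :=
  ⨆ m : List A, W.map (shiftOp (u ++ m))

/-- The series annihilated by all shifts by words having `u` as a factor. -/
def shiftAnnihilator (u : List A) : Submodule ℚ (List A → ℚ) :=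
  ⨅ (m : List A) (m' : List A), LinearMap.ker (shiftOp (m ++ u ++ m'))

variable {u : List A} {W : Submodule ℚ (List A → ℚ)}

theorem mem_shiftAnnihilator {τ : List A → ℚ} :
    τ ∈ shiftAnnihilator u ↔ ∀ m m', shiftOp (m ++ u ++ m') τ = 0 := by
  simp [shiftAnnihilator]

theorem shiftOp_mem_shiftSpan {τ : List A → ℚ} (hτ : τ ∈ W) (m : List A) :
    shiftOp (u ++ m) τ ∈ shiftSpan u W :=
  Submodule.mem_iSup_of_mem m ⟨τ, hτ, rfl⟩

theorem invariantSub_shiftSpan : InvariantSub (shiftSpan u W) := by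
  intro τ hτ v
  have : shiftSpan u W ≤ (shiftSpan u W).comap (shiftOp v) := by
    refine iSup_le fun m => ?_
    rintro _ ⟨τ, hτ, rfl⟩
    simp only [Submodule.mem_comap, ← shiftOp_append, List.append_assoc]
    exact shiftOp_mem_shiftSpan hτ _
  exact this hτ

theorem invariantSub_shiftAnnihilator : InvariantSub (shiftAnnihilator (A := A) u) := by
  intro τ hτ v
  rw [mem_shiftAnnihilator] at *
  intro m m'
  rw [← shiftOp_append]
  simpa using hτ (v ++ m) m'

theorem InvariantSub.inf {W W' : Submodule ℚ (List A → ℚ)} (h : InvariantSub W)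
    (h' : InvariantSub W') : InvariantSub (W ⊓ W') :=
  fun τ hτ v => ⟨h τ hτ.1 v, h' τ hτ.2 v⟩

theorem InvariantSub.shiftSpan_le (h : InvariantSub W) : shiftSpan u W ≤ W := by
  refine iSup_le fun m => ?_
  rintro _ ⟨τ, hτ, rfl⟩
  exact h τ hτ _

theorem shiftSpan_mono {W W' : Submodule ℚ (List A → ℚ)} (h : W ≤ W') :
    shiftSpan u W ≤ shiftSpan u W' :=
  iSup_mono fun _ => Submodule.map_mono h

theorem shiftSpan_iSup {ι : Type*} (W : ι → Submodule ℚ (List A → ℚ)) :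
    shiftSpan u (⨆ i, W i) = ⨆ i, shiftSpan u (W i) := by
  simp only [shiftSpan, Submodule.map_iSup]
  exact iSup_comm

theorem shiftSpan_eq_bot_of_le_shiftAnnihilator (h : W ≤ shiftAnnihilator u) :
    shiftSpan u W = ⊥ := by
  refine eq_bot_iff.2 (iSup_le fun m => ?_)
  rintro _ ⟨τ, hτ, rfl⟩
  simpa using mem_shiftAnnihilator.1 (h hτ) [] m

theorem InvariantSub.le_shiftAnnihilator (h : InvariantSub W) (hW : shiftSpan u W = ⊥) :
    W ≤ shiftAnnihilator u := by
  intro τ hτ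
  rw [mem_shiftAnnihilator]
  intro m m'
  rw [List.append_assoc, shiftOp_append]
  have := shiftOp_mem_shiftSpan (u := u) (h τ hτ m) m'
  rwa [hW, Submodule.mem_bot] at this

theorem shiftSpan_synSpace_le {N : Submodule ℚ (List A → ℚ)}
    (h : ∀ m m', shiftOp (m ++ u ++ m') σ ∈ N) : shiftSpan u (synSpace σ) ≤ N := by
  refine iSup_le fun m' => Submodule.map_le_iff_le_comap.2 (Submodule.span_le.2 ?_)
  rintro _ ⟨m, rfl⟩
  simpa [← shiftOp_append] using h m m'

theorem CompletelyReducibleSeries.synSpace_le (h : CompletelyReducibleSeries σ) (u : List A) :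
    synSpace σ ≤ shiftSpan u (synSpace σ) ⊔ shiftAnnihilator u := by
  obtain ⟨n, W, hW, -, hsup⟩ := h
  conv_lhs => rw [← hsup]
  refine iSup_le fun i => ?_
  obtain ⟨hle, hinv, -, hirr⟩ := hW i
  rcases hirr (shiftSpan u (W i)) hinv.shiftSpan_le invariantSub_shiftSpan with h | h
  · exact (hinv.le_shiftAnnihilator h).trans le_sup_right
  · exact (h.ge.trans (shiftSpan_mono hle)).trans le_sup_left

theorem CompletelyReducibleSeries.disjoint (h : CompletelyReducibleSeries σ) (u : List A) :
    Disjoint (shiftSpan u (synSpace σ)) (shiftAnnihilator u) := by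
  obtain ⟨n, W, hW, hind, hsup⟩ := h
  rw [Submodule.disjoint_def]
  intro τ hτ hann
  rw [← hsup, shiftSpan_iSup, Submodule.mem_iSup_iff_exists_finsupp] at hτ
  obtain ⟨f, hf, rfl⟩ := hτ
  rw [mem_shiftAnnihilator] at hann
  have hfann : ∀ i, f i ∈ shiftAnnihilator u := by
    intro i
    rw [mem_shiftAnnihilator]
    intro m m'
    have h0 := hann m m'
    rw [Finsupp.sum_fintype _ _ (fun _ => rfl), map_sum] at h0
    exact (iSupIndep_iff_finsetSum_eq_zero_imp_eq_zero W).1 hind Finset.univ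
      (fun i => shiftOp (m ++ u ++ m') (f i))
      (fun i _ => (hW i).2.1 _ ((hW i).2.1.shiftSpan_le (hf i)) _) h0 i (Finset.mem_univ i)
  refine Finset.sum_eq_zero fun i _ => ?_
  obtain ⟨-, hinv, -, hirr⟩ := hW i
  have hmem : f i ∈ W i ⊓ shiftAnnihilator u := ⟨hinv.shiftSpan_le (hf i), hfann i⟩
  rcases hirr (W i ⊓ shiftAnnihilator u) inf_le_left (hinv.inf invariantSub_shiftAnnihilator)
    with h | h
  · simpa [h] using hmem
  · have := hf i
    rw [shiftSpan_eq_bot_of_le_shiftAnnihilator (inf_eq_left.1 h)] at this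
    simpa using this

end CompletelyReducible

end Birec

namespace Birec

section StableSubmonoid

variable {A : Type*} {X : Set (List A)} {M : Type*} [Monoid M] [Fintype M] {f : M → ℚ}
  {ψ : List A → M} {u : List A}

theorem sum_corner_mul_left_of_completelyReducible {σ : List A → ℚ}
    (hσ : CompletelyReducibleSeries σ) (hmul : ∀ v w, ψ (v ++ w) = ψ v * ψ w)
    (hsurj : Function.Surjective ψ) (hf : ∀ w, σ w = f (ψ w))
    (he : IsMinimalIdempotent (ψ u)) (m : M) :
    ∑ g ∈ corner (ψ u), f (m * g) = ∑ g ∈ corner (ψ u), f g := by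
  obtain ⟨r, hr⟩ := hsurj.hasRightInverse
  obtain ⟨w, rfl⟩ := hsurj m
  obtain ⟨τ₁, h₁, τ₀, h₀, hadd⟩ :=
    Submodule.mem_sup.1 (hσ.synSpace_le u (self_mem_synSpace σ))
  let N : Submodule ℚ (List A → ℚ) :=
    { carrier := {τ | ∑ g ∈ corner (ψ u), τ (w ++ u ++ r g) = ∑ g ∈ corner (ψ u), τ (u ++ r g)}
      zero_mem' := by simp
      add_mem' := fun {a b} (ha : _ = _) (hb : _ = _) => by
        simp only [Set.mem_ofPred_eq, Pi.add_apply, Finset.sum_add_distrib, ha, hb]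
      smul_mem' := fun c a (ha : _ = _) => by
        simp only [Set.mem_ofPred_eq, Pi.smul_apply, ← Finset.smul_sum, ha] }
  have hN : shiftSpan u (synSpace σ) ≤ N := by
    refine shiftSpan_synSpace_le fun p q => ?_
    have key : ∀ x, ∑ g ∈ corner (ψ u), f (ψ p * (ψ u * x * ψ u * g)) =
        ∑ g ∈ corner (ψ u), f (ψ p * g) := fun x =>
      he.sum_mul_left (IsIdempotentElem.mem_corner he.1 x) fun g => f (ψ p * g)
    have h1 := (key (ψ q * ψ w)).trans (key (ψ q)).symm
    simpa only [N, Submodule.mem_mk, AddSubmonoid.mem_mk, AddSubsemigroup.mem_mk,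
      Set.mem_ofPred_eq, shiftOp_apply, hf, hmul, hr _, mul_assoc] using h1
  have h0 : ∀ (p : List A) (g : M), τ₀ (p ++ u ++ r g) = 0 := fun p g => by
    simpa [shiftOp_apply] using congrFun (mem_shiftAnnihilator.1 h₀ p (r g)) []
  have hval : ∀ (p : List A) (g : M), τ₁ (p ++ u ++ r g) = f (ψ p * (ψ u * g)) := fun p g => by
    have := hf (p ++ u ++ r g)
    rw [← hadd, Pi.add_apply, h0, add_zero] at this
    rw [this, hmul, hmul, hr, mul_assoc]
  have hmem : ∑ g ∈ corner (ψ u), τ₁ (w ++ u ++ r g) = ∑ g ∈ corner (ψ u), τ₁ (u ++ r g) := hN h₁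
  calc ∑ g ∈ corner (ψ u), f (ψ w * g) = ∑ g ∈ corner (ψ u), τ₁ (w ++ u ++ r g) :=
        Finset.sum_congr rfl fun g hg => by rw [hval, (mem_corner.1 hg).1]
    _ = ∑ g ∈ corner (ψ u), τ₁ (u ++ r g) := hmem
    _ = ∑ g ∈ corner (ψ u), f g := by
      refine Finset.sum_congr rfl fun g hg => ?_
      have h2 := hf (u ++ r g)
      have h3 := h0 [] g
      rw [List.nil_append] at h3
      rw [← hadd, Pi.add_apply, h3, add_zero] at h2
      rw [h2, hmul, hr, (mem_corner.1 hg).1]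

theorem sum_corner_mul_right_of_completelyReducible {σ : List A → ℚ}
    (hσ : CompletelyReducibleSeries σ) (hmul : ∀ v w, ψ (v ++ w) = ψ v * ψ w)
    (hsurj : Function.Surjective ψ) (hf : ∀ w, σ w = f (ψ w))
    (he : IsMinimalIdempotent (ψ u)) (m : M) :
    ∑ g ∈ corner (ψ u), f (g * m) = ∑ g ∈ corner (ψ u), f g := by
  obtain ⟨r, hr⟩ := hsurj.hasRightInverse
  obtain ⟨w, rfl⟩ := hsurj m
  have hone : ∀ x, x * ψ [] = x := fun x => by
    obtain ⟨y, rfl⟩ := hsurj x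
    rw [← hmul, List.append_nil]
  let τ : List A → ℚ := ∑ g ∈ corner (ψ u), (shiftOp (r g ++ u ++ w) σ - shiftOp (r g ++ u) σ)
  have hτ : τ ∈ shiftSpan u (synSpace σ) := by
    have h (g : M) (v : List A) : shiftOp (r g ++ u ++ v) σ ∈ shiftSpan u (synSpace σ) := by
      rw [List.append_assoc, shiftOp_append]
      exact shiftOp_mem_shiftSpan
        (invariantSub_synSpace σ _ (self_mem_synSpace σ) _) v
    refine Submodule.sum_mem _ fun g _ => Submodule.sub_mem _ (h g w) ?_
    simpa using h g []
  have hτ' : τ ∈ shiftAnnihilator u := by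
    refine mem_shiftAnnihilator.2 fun p q => funext fun v => ?_
    have key : ∀ x, ∑ g ∈ corner (ψ u), f (g * (ψ u * x * ψ u) * (ψ q * ψ v)) =
        ∑ g ∈ corner (ψ u), f (g * (ψ q * ψ v)) := fun x =>
      he.sum_mul_right (IsIdempotentElem.mem_corner he.1 x) fun g => f (g * (ψ q * ψ v))
    have h1 := (key (ψ w * ψ p)).trans (key (ψ p)).symm
    simp only [mul_assoc] at h1
    simp only [τ, shiftOp_apply, Finset.sum_apply, Pi.sub_apply, Finset.sum_sub_distrib, hf, hmul,
      hr _, mul_assoc, h1, sub_self, Pi.zero_apply]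
  have h0 := congrFun (Submodule.disjoint_def.1 (hσ.disjoint u) τ hτ hτ') []
  simp only [τ, shiftOp_apply, Finset.sum_apply, Pi.sub_apply, Finset.sum_sub_distrib, hf, hmul,
    hr _, hone, Pi.zero_apply, sub_eq_zero] at h0
  calc ∑ g ∈ corner (ψ u), f (g * ψ w) = ∑ g ∈ corner (ψ u), f (g * ψ u * ψ w) :=
        Finset.sum_congr rfl fun g hg => by rw [(mem_corner.1 hg).2]
    _ = ∑ g ∈ corner (ψ u), f (g * ψ u) := h0
    _ = ∑ g ∈ corner (ψ u), f g := Finset.sum_congr rfl fun g hg => by rw [(mem_corner.1 hg).2]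

theorem charFun_le_charFun {S : Set (List A)} {v w : List A} (h : v ∈ S → w ∈ S) :
    charFun S v ≤ charFun S w := by
  by_cases hv : v ∈ S <;> by_cases hw : w ∈ S <;> simp_all [charFun]

theorem mem_iff_of_charFun_eq {S : Set (List A)} {v w : List A}
    (h : charFun S v = charFun S w) : v ∈ S ↔ w ∈ S := by
  by_cases hv : v ∈ S <;> by_cases hw : w ∈ S <;> simp_all [charFun]

/-- If the submonoid generated by a code is completely reducible, then multiplying by one of its
words whose image is a minimal idempotent does not change membership. -/
theorem IsCode.mem_star_of_minimalIdempotent (hX : IsCode X)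
    (hcr : CompletelyReducibleLang (star X)) (hmul : ∀ v w, ψ (v ++ w) = ψ v * ψ w)
    (hsurj : Function.Surjective ψ)
    (hrec : ∀ v w, ψ v = ψ w → (v ∈ star X ↔ w ∈ star X))
    (hu : u ∈ star X) (he : IsMinimalIdempotent (ψ u)) (w : List A) :
    (u ++ w ∈ star X → w ∈ star X) ∧ (w ++ u ∈ star X → w ∈ star X) := by
  obtain ⟨r, hr⟩ := hsurj.hasRightInverse
  set f : M → ℚ := fun m => charFun (star X) (r m)
  have hf : ∀ w, charFun (star X) w = f (ψ w) := fun w =>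
    le_antisymm (charFun_le_charFun (hrec _ _ (hr _)).2) (charFun_le_charFun (hrec _ _ (hr _)).1)
  have hself := IsIdempotentElem.self_mem_corner he.1
  have hidem : ψ u * ψ u = ψ u := he.1
  have hleft : u ++ w ++ u ∈ star X → w ++ u ∈ star X := by
    have hle : ∀ g ∈ corner (ψ u), f (ψ w * g) ≤ f (ψ u * ψ w * ψ u * g) := fun g hg => by
      have := charFun_le_charFun (v := w ++ r g) (w := u ++ (w ++ r g)) (append_mem_star hu)
      rw [hf, hf, hmul, hmul, hmul, hr, ← mul_assoc] at this
      rwa [mul_assoc _ (ψ u) g, (mem_corner.1 hg).1]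
    have hsum := (sum_corner_mul_left_of_completelyReducible hcr hmul hsurj hf he (ψ w)).trans
      (he.sum_mul_left (IsIdempotentElem.mem_corner he.1 (ψ w)) f).symm
    have := (Finset.sum_eq_sum_iff_of_le hle).1 hsum _ hself
    refine (mem_iff_of_charFun_eq ?_).2
    rw [hf, hf, hmul, hmul, hmul, this, mul_assoc _ (ψ u), hidem]
  have hright : u ++ w ++ u ∈ star X → u ++ w ∈ star X := by
    have hle : ∀ g ∈ corner (ψ u), f (g * ψ w) ≤ f (g * (ψ u * ψ w * ψ u)) := fun g hg => by
      have := charFun_le_charFun (v := r g ++ w) (w := r g ++ w ++ u)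
        fun h => append_mem_star h hu
      rw [hf, hf, hmul, hmul, hmul, hr] at this
      rwa [← mul_assoc, ← mul_assoc, (mem_corner.1 hg).2]
    have hsum := (sum_corner_mul_right_of_completelyReducible hcr hmul hsurj hf he (ψ w)).trans
      (he.sum_mul_right (IsIdempotentElem.mem_corner he.1 (ψ w)) f).symm
    have := (Finset.sum_eq_sum_iff_of_le hle).1 hsum _ hself
    refine (mem_iff_of_charFun_eq ?_).2
    rw [hf, hf, hmul, hmul, hmul, this, ← mul_assoc, ← mul_assoc, hidem]
  exact ⟨fun h => hX.mem_star_of_append hu h (hleft (append_mem_star h hu)),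
    fun h => hX.mem_star_of_append hu (hright (by simpa using append_mem_star hu h)) h⟩

/-- In the submonoid generated by a dense code, every word `x` is both a prefix and a suffix of a
word whose image in a finite monoid is a minimal idempotent. -/
theorem exists_minimalIdempotent_of_langDense (hdense : LangDense (star X))
    (hmul : ∀ v w, ψ (v ++ w) = ψ v * ψ w) (hsurj : Function.Surjective ψ) {x : List A}
    (hx : x ∈ star X) :
    ∃ p ∈ star X, ∃ q ∈ star X, x ++ p = q ++ x ∧ IsMinimalIdempotent (ψ (x ++ p)) := by
  obtain ⟨k, hk⟩ := exists_forall_isMinimalIdempotent M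
  obtain ⟨v, rfl⟩ := hsurj k
  obtain ⟨a, b, hab⟩ := hdense v
  obtain ⟨n, hn, hidem⟩ := exists_isIdempotentElem_pow (ψ (x ++ (a ++ v ++ b) ++ x))
  obtain ⟨n, rfl⟩ := Nat.exists_eq_add_one_of_ne_zero hn.ne'
  set y := x ++ (a ++ v ++ b) ++ x with hy
  have hystar : y ∈ star X := append_mem_star (append_mem_star hx hab) hx
  have hz : ∀ n, ∃ z ∈ star X, z ++ y = y ++ z ∧ ψ (y ++ z) = ψ y ^ (n + 1) := by
    intro n
    induction n with
    | zero => exact ⟨[], nil_mem_star X, by simp, by simp⟩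
    | succ n ih =>
      obtain ⟨z, hz, hzy, hpow⟩ := ih
      refine ⟨y ++ z, append_mem_star hystar hz, by rw [List.append_assoc, hzy], ?_⟩
      rw [hmul, hpow, ← pow_succ']
  obtain ⟨z, hz, hzy, hpow⟩ := hz n
  refine ⟨a ++ v ++ b ++ x ++ z, append_mem_star (append_mem_star hab hx) hz,
    z ++ (x ++ (a ++ v ++ b)), append_mem_star hz (append_mem_star hx hab), ?_, ?_⟩
  · have := hzy.symm
    rw [hy] at this
    simpa using this
  · have h1 : x ++ (a ++ v ++ b ++ x ++ z) = y ++ z := by simp [hy]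
    have h2 : y ++ z = x ++ a ++ v ++ (b ++ x ++ z) := by simp [hy]
    rw [h1]
    rw [← hpow, h2, hmul, hmul] at hidem
    rw [h2, hmul, hmul]
    exact hk _ _ hidem

theorem IsCode.eq_of_append_mem_star (hX : IsCode X) {x y z : List A} (hx : x ∈ X) (hy : y ∈ X)
    (hz : z ∈ star X) (h : x ++ z = y ∨ z ++ x = y) : x = y := by
  obtain ⟨l, hl, rfl⟩ := hz
  rcases h with h | h
  · have := hX.2 (x :: l) [y] (by simpa using ⟨hx, hl⟩) (by simpa using hy) (by simpa using h)
    simp at this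
    exact this.1
  · have hlx : ∀ w ∈ l ++ [x], w ∈ X := fun w hw => by
      rcases List.mem_append.1 hw with hw | hw
      · exact hl w hw
      · rwa [List.mem_singleton.1 hw]
    have := hX.2 (l ++ [x]) [y] hlx (by simpa using hy) (by simpa using h)
    simpa using (List.append_inj' (s₂ := []) (t₂ := [y]) this rfl).2

end StableSubmonoid

end Birec

open Birec

/-- **Corollary (Reutenauer).** Let `X` be a recognizable maximal code.  If `X*` is
completely reducible over `ℚ`, then `X` is a bifix code. -/
theorem maximal_code_completelyReducible_bifix {A : Type*} [Fintype A]
    (X : Set (List A)) (hrec : Recognizable X) (hmax : IsMaximalCode X)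
    (hcr : CompletelyReducibleLang (star X)) :
    IsBifixCode X := by
  obtain ⟨M, _, _, ψ, hmul, hsurj, hψ⟩ := hrec.star.exists_monoid
  have := Fintype.ofFinite M
  have hdense := hmax.langDense_star
  have hX := hmax.1
  refine ⟨⟨hX.1, ?_⟩, hX.1, ?_⟩
  · rintro x hx _ hy ⟨z, rfl⟩
    obtain ⟨p, hp, q, hq, hpq, hmin⟩ :=
      exists_minimalIdempotent_of_langDense hdense hmul hsurj (subset_star X hx)
    have hz := (hX.mem_star_of_minimalIdempotent hcr hmul hsurj hψ
      (append_mem_star (subset_star X hx) hp) hmin z).1 (by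
        rw [hpq, List.append_assoc]; exact append_mem_star hq (subset_star X hy))
    exact hX.eq_of_append_mem_star hx hy hz (Or.inl rfl)
  · rintro x hx _ hy ⟨z, rfl⟩
    obtain ⟨p, hp, q, hq, hpq, hmin⟩ :=
      exists_minimalIdempotent_of_langDense hdense hmul hsurj (subset_star X hx)
    have hz := (hX.mem_star_of_minimalIdempotent hcr hmul hsurj hψ
      (append_mem_star (subset_star X hx) hp) hmin z).2 (by
        rw [← List.append_assoc]; exact append_mem_star (subset_star X hy) hp)
    exact hX.eq_of_append_mem_star hx hy hz (Or.inr rfl)
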